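/- arXiv:math/0307401 — 2 statements merged into one kernel-verified Lean document; each statement's English description precedes it below -/
import Mathlib

section
/- Let h : Σ₂* → Σ₂* be a morphism with h(01) ≠ ε. If there exists an infinite 7/3-power-free binary word whose image under h is 7/3-power-free, then h is non-erasing and h(01101001) is 7/3-power-free. -/
/-- The Thue–Morse morphism `μ` on a single letter (`false` = 0, `true` = 1):
`μ(0) = 01`, `μ(1) = 10`. -/
def muLetter : Bool → List Bool
  | false => [false, true]
  | true  => [true, false]

/-- The Thue–Morse morphism `μ` on binary words. -/
def mu (w : List Bool) : List Bool := (w.map muLetter).flatten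

/-- `z` is a `β`-power (for a rational `β`): `z = xⁿx'` with `x'` a prefix of `x`
and `n + |x'|/|x| = β`. -/
def IsPower (β : ℚ) (z : List Bool) : Prop :=
  ∃ (n : ℕ) (x x' : List Bool), x ≠ [] ∧ x' <+: x ∧
    z = (List.replicate n x).flatten ++ x' ∧
    (n : ℚ) + (x'.length : ℚ) / (x.length : ℚ) = β

/-- The finite word `w` is `α`-power-free: no subword (contiguous factor) of `w`
is a `β`-power for any rational `β ≥ α`. -/
def PowerFree (α : ℝ) (w : List Bool) : Prop :=
  ∀ z : List Bool, z <:+: w → ∀ β : ℚ, α ≤ (β : ℝ) → ¬ IsPower β z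

/-- The finite word `w` contains an `α`-power: some subword of `w` is a
`β`-power for some rational `β ≥ α`. -/
def ContainsPower (α : ℝ) (w : List Bool) : Prop :=
  ∃ z : List Bool, z <:+: w ∧ ∃ β : ℚ, α ≤ (β : ℝ) ∧ IsPower β z

/-- `z` is a (finite) subword of the infinite word `w : ℕ → Bool`. -/
def InfSubword (z : List Bool) (w : ℕ → Bool) : Prop :=
  ∃ i : ℕ, z = (List.range z.length).map fun k => w (i + k)

/-- The infinite word `w` is `α`-power-free. -/
def PowerFreeInf (α : ℝ) (w : ℕ → Bool) : Prop :=
  ∀ z : List Bool, InfSubword z w → ∀ β : ℚ, α ≤ (β : ℝ) → ¬ IsPower β z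

/-- The infinite word `w` contains an `α`-power. -/
def ContainsPowerInf (α : ℝ) (w : ℕ → Bool) : Prop :=
  ∃ z : List Bool, InfSubword z w ∧ ∃ β : ℚ, α ≤ (β : ℝ) ∧ IsPower β z

/-- The length-`n` prefix of an infinite word. -/
def wordPrefix (w : ℕ → Bool) (n : ℕ) : List Bool := (List.range n).map w

/-- `h : Σ₂* → Σ₂*` is a morphism. -/
def IsMorphism (h : List Bool → List Bool) : Prop :=
  ∀ x y : List Bool, h (x ++ y) = h x ++ h y

/-- A morphism is non-erasing if it erases neither letter. -/
def NonErasing (h : List Bool → List Bool) : Prop :=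
  h [false] ≠ [] ∧ h [true] ≠ []

/-- The infinite word `u` is the image of the infinite word `w` under the morphism `h`
(obtained by concatenating the images of the letters of `w`): every `h(w[0..n))` is a
prefix of `u`, and these prefixes exhaust `u`. -/
def IsMorphImage (h : List Bool → List Bool) (w u : ℕ → Bool) : Prop :=
  (∀ n : ℕ, wordPrefix u (h (wordPrefix w n)).length = h (wordPrefix w n)) ∧
  ∀ m : ℕ, ∃ n : ℕ, m ≤ (h (wordPrefix w n)).length

/-- The complementation morphism `E` : `E(0) = 1`, `E(1) = 0`. -/
def eMorph (w : List Bool) : List Bool := w.map fun b => !b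

/-- The Thue–Morse word `μ^ω(0)` (`tm n` = parity of the binary digit sum of `n`). -/
def tm (n : ℕ) : Bool := (Nat.digits 2 n).sum % 2 == 1

/-- `μ³(0) = 01101001`. -/
def w01101001 : List Bool := [false, true, true, false, true, false, false, true]

/-- `μ³(1) = 10010110`. -/
def w10010110 : List Bool := [true, false, false, true, false, true, true, false]

/-!
In a `7/3`-power-free word there are no overlaps of period at most 3, that is, no `aaa`, `ababa` or
`abcabca`. Away from the first letter this forces all factors `aa` to start at positions of the same
parity, so some suffix of the word splits into the blocks `01` and `10`: it is `μ(v)`, and `v` is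
again `7/3`-power-free because `μ` is uniform. Iterating, every `μᵏ(b)`, and in particular
`01101001 = μ³(0)`, is a factor of the word; its image is then a factor of the image of the word.

If a morphism erases a letter, the images of the prefixes of an infinite word are powers of a single
word; when the image is infinite their exponents are unbounded.
-/

section Factors

variable {w : ℕ → Bool} {z z' : List Bool}

theorem wordPrefix_add (w : ℕ → Bool) (m n : ℕ) :
    wordPrefix w (m + n) = wordPrefix w m ++ wordPrefix (fun k => w (m + k)) n := by
  simp [wordPrefix, List.range_add, Function.comp_def]

theorem length_wordPrefix (w : ℕ → Bool) (n : ℕ) : (wordPrefix w n).length = n := by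
  simp [wordPrefix]

theorem infSubword_wordPrefix_shift (w : ℕ → Bool) (i n : ℕ) :
    InfSubword (wordPrefix (fun k => w (i + k)) n) w :=
  ⟨i, by rw [length_wordPrefix]; rfl⟩

theorem infSubword_iff_isInfix_wordPrefix :
    InfSubword z w ↔ ∃ n, z <:+: wordPrefix w n := by
  constructor
  · rintro ⟨i, hz⟩
    refine ⟨i + z.length, List.IsSuffix.isInfix ⟨wordPrefix w i, ?_⟩⟩
    rw [wordPrefix_add]
    exact congrArg _ hz
  · rintro ⟨n, s, t, hst⟩
    have hn : n = s.length + (z.length + t.length) := by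
      simpa [length_wordPrefix, add_assoc] using (congrArg List.length hst).symm
    rw [hn, wordPrefix_add, wordPrefix_add, List.append_assoc] at hst
    have hzt := (List.append_inj hst (length_wordPrefix w _).symm).2
    exact ⟨s.length, (List.append_inj hzt (length_wordPrefix _ _).symm).1⟩

theorem InfSubword.of_isInfix (hz : z <:+: z') (hz' : InfSubword z' w) : InfSubword z w :=
  have ⟨n, hn⟩ := infSubword_iff_isInfix_wordPrefix.1 hz'
  infSubword_iff_isInfix_wordPrefix.2 ⟨n, hz.trans hn⟩

theorem InfSubword.of_shift {s : ℕ} (hz : InfSubword z fun k => w (s + k)) : InfSubword z w :=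
  have ⟨i, hi⟩ := hz
  ⟨s + i, by simpa only [add_assoc] using hi⟩

theorem PowerFreeInf.shift {α : ℝ} (hw : PowerFreeInf α w) (s : ℕ) :
    PowerFreeInf α fun k => w (s + k) :=
  fun z hz => hw z hz.of_shift

theorem PowerFreeInf.powerFree {α : ℝ} (hw : PowerFreeInf α w) (hz : InfSubword z w) :
    PowerFree α z :=
  fun y hy => hw y (hz.of_isInfix hy)

end Factors

section Morphisms

variable {h : List Bool → List Bool} {w u : ℕ → Bool} {x y z : List Bool} {α : ℝ}

theorem IsMorphism.map_nil (hmor : IsMorphism h) : h [] = [] := by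
  simpa using hmor [] []

theorem IsMorphism.map_flatten_replicate (hmor : IsMorphism h) (n : ℕ) (x : List Bool) :
    h (List.replicate n x).flatten = (List.replicate n (h x)).flatten := by
  induction n with
  | zero => exact hmor.map_nil
  | succ n ih =>
    rw [List.replicate_succ, List.replicate_succ, List.flatten_cons, List.flatten_cons, hmor, ih]

theorem IsMorphism.map_prefix (hmor : IsMorphism h) (hxy : x <+: y) : h x <+: h y :=
  have ⟨t, ht⟩ := hxy
  ⟨h t, by rw [← hmor, ht]⟩

theorem IsMorphism.map_infix (hmor : IsMorphism h) (hxy : x <:+: y) : h x <:+: h y :=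
  have ⟨s, t, hst⟩ := hxy
  ⟨h s, h t, by rw [← hmor, ← hmor, hst]⟩

theorem IsMorphism.eq_flatten_replicate_of_erases (hmor : IsMorphism h) {b : Bool}
    (hb : h [b] = []) (x : List Bool) :
    h x = (List.replicate (x.count !b) (h [!b])).flatten := by
  induction x with
  | nil => exact hmor.map_nil
  | cons c x ih =>
    rw [← List.singleton_append, hmor, ih]
    obtain rfl | rfl := Bool.eq_or_eq_not c b <;> simp [hb, List.replicate_succ]

theorem IsMorphImage.infSubword_map (hu : IsMorphImage h w u) (hmor : IsMorphism h)
    (hz : InfSubword z w) : InfSubword (h z) u := by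
  obtain ⟨n, hn⟩ := infSubword_iff_isInfix_wordPrefix.1 hz
  refine infSubword_iff_isInfix_wordPrefix.2 ⟨(h (wordPrefix w n)).length, ?_⟩
  rw [hu.1 n]
  exact hmor.map_infix hn

theorem IsPower.map_uniform {β : ℚ} (hz : IsPower β z) (hmor : IsMorphism h) {d : ℕ} (hd : 0 < d)
    (hlen : ∀ x, (h x).length = d * x.length) : IsPower β (h z) := by
  obtain ⟨n, x, x', hx, hx', rfl, rfl⟩ := hz
  have hhx : h x ≠ [] := by
    rw [← List.length_pos_iff, hlen]
    exact Nat.mul_pos hd (List.length_pos_iff.2 hx)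
  refine ⟨n, h x, h x', hhx, hmor.map_prefix hx', ?_, ?_⟩
  · rw [hmor, hmor.map_flatten_replicate]
  · rw [hlen, hlen, Nat.cast_mul, Nat.cast_mul, mul_div_mul_left _ _ (by positivity)]

theorem PowerFreeInf.of_uniform_image (huf : PowerFreeInf α u) (hmor : IsMorphism h) {d : ℕ}
    (hd : 0 < d) (hlen : ∀ x, (h x).length = d * x.length) (hu : IsMorphImage h w u) :
    PowerFreeInf α w :=
  fun _ hz β hβ hpow => huf _ (hu.infSubword_map hmor hz) β hβ (hpow.map_uniform hmor hd hlen)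

theorem isPower_flatten_replicate (n : ℕ) (hx : x ≠ []) :
    IsPower n (List.replicate n x).flatten :=
  ⟨n, x, [], hx, List.nil_prefix, by simp, by simp⟩

theorem PowerFreeInf.map_letter_ne_nil (huf : PowerFreeInf α u) (hmor : IsMorphism h)
    (hu : IsMorphImage h w u) (b : Bool) : h [b] ≠ [] := by
  intro hb
  obtain ⟨N, hN⟩ := exists_nat_ge α
  obtain ⟨n, hn⟩ := hu.2 (N * (h [!b]).length + 1)
  have himage := hmor.eq_flatten_replicate_of_erases hb (wordPrefix w n)
  set c := (wordPrefix w n).count !b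
  have hlen : N * (h [!b]).length < c * (h [!b]).length := by
    simpa [himage] using hn
  have hne : h [!b] ≠ [] := fun hnil => by simp [hnil] at hlen
  have hNc : N < c := lt_of_mul_lt_mul_right hlen (Nat.zero_le _)
  have hfactor : InfSubword (h (wordPrefix w n)) u :=
    hu.infSubword_map hmor (infSubword_iff_isInfix_wordPrefix.2 ⟨n, List.infix_rfl⟩)
  rw [himage] at hfactor
  refine huf _ hfactor c ?_ (isPower_flatten_replicate c hne)
  exact hN.trans (by exact_mod_cast hNc.le)

end Morphisms

section ThueMorse

theorem muLetter_eq (b : Bool) : muLetter b = [b, !b] := by cases b <;> rfl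

theorem isMorphism_mu : IsMorphism mu := fun x y => by simp [mu]

theorem length_mu (x : List Bool) : (mu x).length = 2 * x.length := by
  simp [mu, muLetter_eq, Function.comp_def, mul_comm]

theorem isMorphImage_mu_of_forall_ne {u : ℕ → Bool} (hu : ∀ n, u (2 * n) ≠ u (2 * n + 1)) :
    IsMorphImage mu (fun n => u (2 * n)) u := by
  have hprefix (n : ℕ) : wordPrefix u (2 * n) = mu (wordPrefix (fun n => u (2 * n)) n) := by
    induction n with
    | zero => rfl
    | succ n ih =>
      rw [mul_add_one, wordPrefix_add, wordPrefix_add, isMorphism_mu, ih]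
      simp [wordPrefix, List.range_succ, mu, muLetter_eq, Bool.eq_not.2 (hu n).symm]
  refine ⟨fun n => ?_, fun m => ⟨m, ?_⟩⟩
  · rw [length_mu, length_wordPrefix, hprefix]
  · rw [length_mu, length_wordPrefix]
    lia

end ThueMorse

section Overlaps

variable {w : ℕ → Bool}

theorem PowerFreeInf.not_overlap {α : ℝ} (hw : PowerFreeInf α w) {p : ℕ} (hp : 0 < p)
    (hα : α ≤ 2 + 1 / p) (i : ℕ) : ¬ ∀ k ≤ p, w (i + k) = w (i + p + k) := by
  intro hper
  set x := wordPrefix (fun k => w (i + k)) p with hx_def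
  have hx : x.length = p := length_wordPrefix _ _
  have hrepeat : wordPrefix (fun k => w (i + p + k)) p = x :=
    List.map_congr_left fun k hk => (hper k (List.mem_range.1 hk).le).symm
  have hhead : [w i] <+: x := by
    obtain ⟨q, rfl⟩ := Nat.exists_eq_add_of_lt hp
    rw [hx_def, zero_add, add_comm, wordPrefix_add]
    exact List.prefix_append _ _
  have hlast : w (i + p + p) = w i := (hper p le_rfl).symm.trans (hper 0 p.zero_le).symm
  have hfactor : wordPrefix (fun k => w (i + k)) (p + p + 1) = x ++ x ++ [w i] := by
    rw [wordPrefix_add, wordPrefix_add, ← hx_def]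
    simp only [← add_assoc, hrepeat]
    simp [wordPrefix, hlast]
  refine hw _ (infSubword_wordPrefix_shift w i (p + p + 1)) (2 + 1 / p) (by push_cast; exact hα)
    ⟨2, x, [w i], List.length_pos_iff.1 (hx ▸ hp), hhead, ?_, ?_⟩
  · rw [hfactor]; simp [List.replicate]
  · simp [hx]

variable (hw : PowerFreeInf (7 / 3) w)
include hw

theorem PowerFreeInf.ne_of_eq_succ {i : ℕ} (hi : w i = w (i + 1)) : w (i + 1) ≠ w (i + 2) := by
  intro hi'
  refine hw.not_overlap one_pos (by norm_num) i fun k hk => ?_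
  interval_cases k
  exacts [hi, hi']

theorem PowerFreeInf.ne_add_three_of_eq_succ {i : ℕ} (hi : w (i + 1) = w (i + 2)) :
    w (i + 4) ≠ w (i + 5) := by
  intro hi'
  have h01 : w i = !w (i + 1) := Bool.eq_not.2 fun h => hw.ne_of_eq_succ h hi
  have h23 : w (i + 2) = !w (i + 3) := Bool.eq_not.2 (hw.ne_of_eq_succ hi)
  have h34 : w (i + 3) = !w (i + 4) := Bool.eq_not.2 fun h => hw.ne_of_eq_succ h hi'
  have h56 : w (i + 5) = !w (i + 6) := Bool.eq_not.2 (hw.ne_of_eq_succ hi')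
  refine hw.not_overlap three_pos (by norm_num) i fun k hk => ?_
  interval_cases k <;> simp [*]

theorem PowerFreeInf.eq_add_two_or_eq_add_four_of_eq_succ {i : ℕ} (hi : w (i + 1) = w (i + 2)) :
    w (i + 3) = w (i + 4) ∨ w (i + 5) = w (i + 6) := by
  by_contra! hne
  have h23 : w (i + 2) = !w (i + 3) := Bool.eq_not.2 (hw.ne_of_eq_succ hi)
  have h34 : w (i + 3) = !w (i + 4) := Bool.eq_not.2 hne.1
  have h45 : w (i + 4) = !w (i + 5) := Bool.eq_not.2 (hw.ne_add_three_of_eq_succ hi)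
  have h56 : w (i + 5) = !w (i + 6) := Bool.eq_not.2 hne.2
  refine hw.not_overlap two_pos (by norm_num) (i + 2) fun k hk => ?_
  interval_cases k <;> simp [add_assoc, *]

-- A factor `aa` is followed by another one after 2 or 4 letters, so excluding `aa` at distances
-- 1 and 3 excludes it at every odd distance.
theorem PowerFreeInf.ne_add_odd_of_eq_succ {i : ℕ} (hi : w (i + 1) = w (i + 2)) (n : ℕ) :
    w (i + 2 + 2 * n) ≠ w (i + 2 + 2 * n + 1) := by
  induction n using Nat.strong_induction_on generalizing i with
  | _ n ih =>
    match n with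
    | 0 => exact hw.ne_of_eq_succ hi
    | 1 => exact hw.ne_add_three_of_eq_succ hi
    | n + 2 =>
      obtain h | h := hw.eq_add_two_or_eq_add_four_of_eq_succ hi
      · convert ih (n + 1) (by lia) (i := i + 2) h using 2 <;> lia
      · convert ih n (by lia) (i := i + 4) h using 2 <;> lia

theorem PowerFreeInf.exists_forall_ne :
    ∃ s, ∀ n, w (s + 2 * n) ≠ w (s + 2 * n + 1) := by
  by_cases hsq : ∃ i, w (i + 1) = w (i + 2)
  · obtain ⟨i, hi⟩ := hsq
    exact ⟨i + 2, hw.ne_add_odd_of_eq_succ hi⟩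
  · push Not at hsq
    exact ⟨1, fun n => by convert hsq (2 * n) using 2 <;> ring⟩

theorem PowerFreeInf.exists_isMorphImage_mu_shift :
    ∃ s v, PowerFreeInf (7 / 3) v ∧ IsMorphImage mu v fun k => w (s + k) := by
  obtain ⟨s, hs⟩ := hw.exists_forall_ne
  have himage := isMorphImage_mu_of_forall_ne (u := fun k => w (s + k)) hs
  exact ⟨s, _, (hw.shift s).of_uniform_image isMorphism_mu two_pos length_mu himage, himage⟩

theorem PowerFreeInf.infSubword_singleton (b : Bool) : InfSubword [b] w := by
  obtain ⟨i, rfl⟩ : ∃ i, w i = b := by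
    by_contra! hb
    have hconst (i : ℕ) : w i = !b := Bool.eq_not.2 (hb i)
    exact hw.ne_of_eq_succ (i := 0) (by simp only [hconst]) (by simp only [hconst])
  exact ⟨i, by simp⟩

theorem PowerFreeInf.infSubword_iterate_mu (k : ℕ) (b : Bool) : InfSubword (mu^[k] [b]) w := by
  induction k generalizing w with
  | zero => exact hw.infSubword_singleton b
  | succ k ih =>
    obtain ⟨s, v, hv, himage⟩ := hw.exists_isMorphImage_mu_shift
    rw [Function.iterate_succ_apply']
    exact (himage.infSubword_map isMorphism_mu (ih hv)).of_shift

end Overlaps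

theorem power_free_image_implies_nonerasing_general {α : ℝ} {h : List Bool → List Bool}
    (hmor : IsMorphism h) {w u : ℕ → Bool} (hw : PowerFreeInf (7 / 3) w)
    (hu : IsMorphImage h w u) (huf : PowerFreeInf α u) :
    NonErasing h ∧ ∀ (k : ℕ) (b : Bool), PowerFree α (h (mu^[k] [b])) :=
  ⟨⟨huf.map_letter_ne_nil hmor hu false, huf.map_letter_ne_nil hmor hu true⟩,
    fun k b => huf.powerFree (hu.infSubword_map hmor (hw.infSubword_iterate_mu k b))⟩

/-- If `h` is a morphism with `h(01) ≠ ε` and some infinite `7/3`-power-free word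
has `7/3`-power-free image under `h`, then `h` is non-erasing and `h(01101001)` is
`7/3`-power-free. -/
theorem power_free_image_implies_nonerasing (h : List Bool → List Bool)
    (hmor : IsMorphism h) (h01 : h [false, true] ≠ [])
    (hex : ∃ w u : ℕ → Bool, PowerFreeInf (7/3 : ℝ) w ∧ IsMorphImage h w u ∧
      PowerFreeInf (7/3 : ℝ) u) :
    NonErasing h ∧ PowerFree (7/3 : ℝ) (h w01101001) := by
  obtain ⟨w, u, hw, hu, huf⟩ := hex
  obtain ⟨hne, hpf⟩ := power_free_image_implies_nonerasing_general hmor hw hu huf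
  exact ⟨hne, hpf 3 false⟩
end

section
/- Let h : Σ₂* → Σ₂* be the morphism defined by h(0) = 0110100110110010110 and h(1) = 1001011001001101001. Then the infinite fixed point h^ω(0) of h beginning with 0 avoids 7/3⁺-powers; that is, h^ω(0) avoids (7/3 + ε)-powers for every ε > 0. -/
/-- The images of the letters under the morphism `h` of Section 4:
`h(0) = 0110100110110010110`, `h(1) = 1001011001001101001`. -/
def h19Letter : Bool → List Bool
  | false => [false, true, true, false, true, false, false, true, true, false, true,
      true, false, false, true, false, true, true, false]
  | true  => [true, false, false, true, false, true, true, false, false, true, false,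
      false, true, true, false, true, false, false, true]

/-- The morphism `h` with `h(0) = 0110100110110010110` and `h(1) = 1001011001001101001`. -/
def h19 (w : List Bool) : List Bool := (w.map h19Letter).flatten

/-!
The exponent of an occurrence of period `p` and length `m` is `m / p`. The images `h(0)` and `h(1)`
are complementary, hence differ in every position, and a factor of length 13 of an image under `h`
determines its position modulo 19. So an occurrence with exponent above `7/3` and period `p ≥ 9`
in `h(w)`, whose first 13 letters reappear `p` places later, has `19 ∣ p`, and reading one column of
the blocks exhibits an occurrence in `w` with period `p / 19` and exponent at least as large.
Periods `p ≤ 8` are excluded by inspecting the images of two-letter words. In a fixed point the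
descent from `p` to `p / 19` never stops.
-/

/-- The factor `w[i] w[i+1] ⋯ w[i+m-1]` of length `m` at position `i` of the infinite word `w`.
Occurrences of repetitions are recorded by the parameters `i` and `m`. -/
def factor {α : Type*} (w : ℕ → α) (i m : ℕ) : List α := (List.range' i m).map w

section Factor

variable {α : Type*} (w : ℕ → α)

@[simp]
theorem length_factor (i m : ℕ) : (factor w i m).length = m := by
  simp [factor]

theorem factor_add (i m n : ℕ) : factor w i (m + n) = factor w i m ++ factor w (i + m) n := by
  simp [factor, ← List.map_append]

theorem factor_prefix_of_le {m n : ℕ} (h : m ≤ n) (i : ℕ) : factor w i m <+: factor w i n :=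
  ⟨factor w (i + m) (n - m), by rw [← factor_add, Nat.add_sub_cancel' h]⟩

theorem take_drop_factor {k m n : ℕ} (h : k + m ≤ n) (i : ℕ) :
    ((factor w i n).drop k).take m = factor w (i + k) m := by
  rw [factor, ← List.map_drop, ← List.map_take, List.drop_range', Nat.mul_one,
    List.take_range'_of_length_ge (by lia), factor]

variable {w}

theorem getElem?_factor {k m : ℕ} (h : k < m) (i : ℕ) : (factor w i m)[k]? = some (w (i + k)) := by
  simp [factor, h]

theorem hasPeriod_factor_iff {i m p : ℕ} :
    (factor w i m).HasPeriod p ↔ ∀ k, k + p < m → w (i + k) = w (i + k + p) := by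
  rw [List.hasPeriod_iff_getElem?, length_factor]
  refine forall_congr' fun k => ?_
  rw [Nat.lt_sub_iff_add_lt]
  refine imp_congr_right fun hk => ?_
  rw [getElem?_factor (by lia), getElem?_factor hk, Option.some_inj, Nat.add_assoc]

theorem factor_eq_factor_add_of_hasPeriod {i m n p : ℕ} (hper : (factor w i m).HasPeriod p)
    (hn : n + p ≤ m) : factor w i n = factor w (i + p) n := by
  refine List.ext_getElem? fun k => ?_
  rcases lt_or_ge k n with hk | hk
  · rw [getElem?_factor hk, getElem?_factor hk, hasPeriod_factor_iff.1 hper k (by lia),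
      Nat.add_right_comm]
  · rw [List.getElem?_eq_none (by simpa), List.getElem?_eq_none (by simpa)]

end Factor

theorem wordPrefix_eq_factor (w : ℕ → Bool) (n : ℕ) : wordPrefix w n = factor w 0 n := by
  rw [wordPrefix, factor, List.range_eq_range']

theorem InfSubword.exists_eq_factor {z : List Bool} {w : ℕ → Bool} (h : InfSubword z w) :
    ∃ i, z = factor w i z.length := by
  obtain ⟨i, hi⟩ := h
  refine ⟨i, hi.trans ?_⟩
  rw [factor, List.range'_eq_map_range, List.map_map, Function.comp_def]

theorem hasPeriod_flatten_replicate_append {α : Type*} {x x' : List α} (h : x' <+: x) (n : ℕ) :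
    ((List.replicate n x).flatten ++ x').HasPeriod x.length := by
  cases n with
  | zero => exact List.hasPeriod_of_length_le _ _ (by simpa using h.length_le)
  | succ n =>
    have flatten_snoc :
        (List.replicate (n + 1) x).flatten = (List.replicate n x).flatten ++ x := by
      simp [List.replicate_succ']
    have overlap : (List.replicate (n + 1) x).flatten ++ x' <+:
        x ++ ((List.replicate (n + 1) x).flatten ++ x') := by
      nth_rw 2 [flatten_snoc]
      rw [List.replicate_succ, List.flatten_cons]
      simpa only [List.append_assoc, List.prefix_append_right_inj] using
        h.trans (List.prefix_append x x')
    simpa [List.HasPeriod, List.replicate_succ] using overlap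

theorem IsPower.exists_hasPeriod {β : ℚ} {z : List Bool} (h : IsPower β z) :
    ∃ p, 0 < p ∧ z.HasPeriod p ∧ (z.length : ℚ) = β * p := by
  obtain ⟨n, x, x', hx, hpre, rfl, rfl⟩ := h
  have hpos : 0 < x.length := List.length_pos_iff.2 hx
  refine ⟨x.length, hpos, hasPeriod_flatten_replicate_append hpre n, ?_⟩
  have hlen : ((List.replicate n x).flatten ++ x').length = n * x.length + x'.length := by simp
  rw [hlen]
  push_cast
  field_simp

section UniformMorphism

variable {f : Bool → List Bool} {d : ℕ} {w u : ℕ → Bool}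

theorem length_flatMap_of_uniform (hf : ∀ b, (f b).length = d) (x : List Bool) :
    (x.flatMap f).length = d * x.length := by
  simp [List.length_flatMap, hf, Nat.mul_comm]

namespace IsMorphImage

theorem factor_mul (hf : ∀ b, (f b).length = d) (h : IsMorphImage (List.flatMap f) w u)
    (q m : ℕ) : factor u (d * q) (d * m) = (factor w q m).flatMap f := by
  have prefix_image : ∀ n, factor u 0 (d * n) = (factor w 0 n).flatMap f := fun n => by
    simpa only [wordPrefix_eq_factor, length_flatMap_of_uniform hf, length_factor] using h.1 n
  have split := prefix_image (q + m)
  rw [Nat.mul_add, factor_add, factor_add, List.flatMap_append, prefix_image q] at split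
  simpa only [Nat.zero_add] using List.append_cancel_left split

theorem factor_eq_take_drop (hf : ∀ b, (f b).length = d) (h : IsMorphImage (List.flatMap f) w u)
    {i m n : ℕ} (hm : i % d + m ≤ d * n) :
    factor u i m = (((factor w (i / d) n).flatMap f).drop (i % d)).take m := by
  rw [← h.factor_mul hf, take_drop_factor u hm, Nat.div_add_mod]

theorem getElem?_block (hf : ∀ b, (f b).length = d) (h : IsMorphImage (List.flatMap f) w u)
    (hd : 0 < d) (i : ℕ) : (f (w (i / d)))[i % d]? = some (u i) := by
  have block : factor u (d * (i / d)) d = f (w (i / d)) := by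
    simpa [factor] using h.factor_mul hf (i / d) 1
  rw [← block, getElem?_factor (Nat.mod_lt i hd), Nat.div_add_mod]

theorem hasPeriod_factor_of_mul (hf : ∀ b, (f b).length = d)
    (hinj : ∀ r < d, Function.Injective fun b => (f b)[r]?)
    (h : IsMorphImage (List.flatMap f) w u) (hd : 0 < d) {i m p n : ℕ}
    (hper : (factor u i m).HasPeriod (d * p)) (hn : d * n < m + d) :
    (factor w (i / d) n).HasPeriod p := by
  refine hasPeriod_factor_iff.2 fun k hk => hinj (i % d) (Nat.mod_lt i hd) ?_
  have mem_run : d * k + d * p < m := by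
    have : d * (k + p + 1) ≤ d * n := Nat.mul_le_mul_left d hk
    lia
  have column : ∀ j, (f (w (i / d + j)))[i % d]? = some (u (i + d * j)) := fun j => by
    simpa only [Nat.add_mul_div_left _ _ hd, Nat.add_mul_mod_self_left] using
      h.getElem?_block hf hd (i + d * j)
  calc (f (w (i / d + k)))[i % d]?
      = some (u (i + d * k)) := column k
    _ = some (u (i + d * k + d * p)) := congrArg some (hasPeriod_factor_iff.1 hper _ mem_run)
    _ = some (u (i + d * (k + p))) := by rw [Nat.mul_add, Nat.add_assoc]
    _ = (f (w (i / d + k + p)))[i % d]? := by rw [Nat.add_assoc, column]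

end IsMorphImage

end UniformMorphism

section H19

theorem length_h19Letter (b : Bool) : (h19Letter b).length = 19 := by
  cases b <;> rfl

theorem h19Letter_column_injective :
    ∀ r < 19, Function.Injective fun b => (h19Letter b)[r]? := by
  decide

theorem h19_pair_not_hasPeriod : ∀ x y : Bool, ∀ a < 19, ∀ p < 9, 0 < p →
    ¬ (((h19 [x, y]).drop a).take (7 * p / 3 + 1)).HasPeriod p := by
  unfold List.HasPeriod
  decide +kernel

theorem h19_pair_synchronizing : ∀ x y x' y' : Bool, ∀ a < 19, ∀ b < 19,
    ((h19 [x, y]).drop a).take 13 = ((h19 [x', y']).drop b).take 13 → a = b := by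
  decide +kernel

variable {w u : ℕ → Bool} {i m p : ℕ}

theorem factor_h19_image_eq_take_drop (h : IsMorphImage h19 w u) (hm : m ≤ 20) (i : ℕ) :
    factor u i m = ((h19 [w (i / 19), w (i / 19 + 1)]).drop (i % 19)).take m :=
  IsMorphImage.factor_eq_take_drop length_h19Letter h (n := 2) (by lia)

theorem mod_eq_of_factor_h19_image_eq (h : IsMorphImage h19 w u) {j : ℕ}
    (heq : factor u i 13 = factor u j 13) : i % 19 = j % 19 := by
  rw [factor_h19_image_eq_take_drop h (by lia), factor_h19_image_eq_take_drop h (by lia)] at heq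
  exact h19_pair_synchronizing _ _ _ _ _ (Nat.mod_lt i (by lia)) _ (Nat.mod_lt j (by lia)) heq

theorem nine_le_of_hasPeriod_h19_image (h : IsMorphImage h19 w u) (hp : 0 < p)
    (hm : 7 * p < 3 * m) (hper : (factor u i m).HasPeriod p) : 9 ≤ p := by
  by_contra! hlt
  have short_hasPeriod : (factor u i (7 * p / 3 + 1)).HasPeriod p :=
    hper.infix (factor_prefix_of_le u (by lia) i).isInfix
  rw [factor_h19_image_eq_take_drop h (by lia)] at short_hasPeriod
  exact h19_pair_not_hasPeriod _ _ _ (Nat.mod_lt i (by lia)) p hlt hp short_hasPeriod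

theorem dvd_of_hasPeriod_h19_image (h : IsMorphImage h19 w u) (hm : 13 + p ≤ m)
    (hper : (factor u i m).HasPeriod p) : 19 ∣ p := by
  have := mod_eq_of_factor_h19_image_eq h (factor_eq_factor_add_of_hasPeriod hper hm)
  lia

theorem exists_hasPeriod_preimage_of_h19_image (h : IsMorphImage h19 w u) (hp : 0 < p)
    (hm : 7 * p < 3 * m) (hper : (factor u i m).HasPeriod p) :
    ∃ j n q, p = 19 * q ∧ 7 * q < 3 * n ∧ (factor w j n).HasPeriod q := by
  have hp9 : 9 ≤ p := nine_le_of_hasPeriod_h19_image h hp hm hper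
  obtain ⟨q, rfl⟩ : 19 ∣ p := dvd_of_hasPeriod_h19_image h (by lia) hper
  exact ⟨i / 19, (m + 18) / 19, q, rfl, by lia,
    IsMorphImage.hasPeriod_factor_of_mul length_h19Letter h19Letter_column_injective h (by lia)
      hper (by lia)⟩

theorem not_hasPeriod_factor_of_h19_fixed (hfix : IsMorphImage h19 w w) (hp : 0 < p)
    (hm : 7 * p < 3 * m) : ¬ (factor w i m).HasPeriod p := by
  induction p using Nat.strong_induction_on generalizing i m with
  | _ p ih =>
    intro hper
    obtain ⟨j, n, q, rfl, hn, hq⟩ := exists_hasPeriod_preimage_of_h19_image hfix hp hm hper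
    exact ih q (by lia) (by lia) hn hq

end H19

theorem h19_fixed_point_avoids_plus_powers_general (w : ℕ → Bool) (hfix : IsMorphImage h19 w w) :
    ∀ ε : ℝ, 0 < ε → PowerFreeInf (7/3 + ε) w := by
  intro ε hε z hz β hβ hpow
  obtain ⟨i, hi⟩ := hz.exists_eq_factor
  obtain ⟨p, hp, hper, hlen⟩ := hpow.exists_hasPeriod
  have hβ' : (7 / 3 : ℚ) < β := by
    have : ((7 / 3 : ℚ) : ℝ) < β := by push_cast; linarith
    exact_mod_cast this
  have hexp : 7 * p < 3 * z.length := by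
    have : (7 / 3 : ℚ) * p < z.length := by rw [hlen]; gcongr
    have : (7 * p : ℚ) < 3 * z.length := by linarith
    exact_mod_cast this
  exact not_hasPeriod_factor_of_h19_fixed hfix hp hexp (hi ▸ hper)

/-- The infinite fixed point `h^ω(0)` of the morphism `h` of Section 4 avoids
`7/3⁺`-powers, i.e. it avoids `(7/3 + ε)`-powers for every `ε > 0`. -/
theorem h19_fixed_point_avoids_plus_powers (w : ℕ → Bool) (h0 : w 0 = false)
    (hfix : IsMorphImage h19 w w) :
    ∀ ε : ℝ, 0 < ε → PowerFreeInf (7/3 + ε) w := by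
  exact h19_fixed_point_avoids_plus_powers_general w hfix
end
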